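/- arXiv:1004.0382 — 3 statements merged into one kernel-verified Lean document; each statement's English description precedes it below -/
import Mathlib

section
/- Let 0 < α < 1 and let z be a complex number with |z - 1| < α. Then (log(1+α)/α)·|1 - z| ≤ |Log z| ≤ (|log(1-α)|/α)·|1 - z|, where Log denotes the principal branch of the complex logarithm. (First half of Lemma A.1 / inequality (A.1) of the paper.) -/
/-!
Put `r = ‖z - 1‖`. Since `z = exp (Log z)`, comparing power series gives
`r ≤ exp ‖Log z‖ - 1`, that is `log (1 + r) ≤ ‖Log z‖`; comparing the Taylor series of
`Log` at `1` with its value at `1 - r` gives `‖Log z‖ ≤ -log (1 - r)`. Concavity of the real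
logarithm along the chords from `1` to `1 + α` and from `1` to `1 - α` turns these into the
two linear bounds.
-/

/-- Concavity of the logarithm: on `[1, 1 + s]` (or `[1 + s, 1]`) it lies above its chord. -/
lemma mul_log_le_log_one_add_mul {s t : ℝ} (hs : 0 < 1 + s) (ht0 : 0 ≤ t) (ht1 : t ≤ 1) :
    t * Real.log (1 + s) ≤ Real.log (1 + t * s) := by
  have h := strictConcaveOn_log_Ioi.concaveOn.2 (Set.mem_Ioi.2 one_pos) (Set.mem_Ioi.2 hs)
    (sub_nonneg.2 ht1) ht0 (by ring)
  simp only [smul_eq_mul, Real.log_one, mul_zero, zero_add] at h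
  rwa [show (1 - t) * 1 + t * (1 + s) = 1 + t * s by ring] at h

lemma log_one_add_norm_le_norm_log {z : ℂ} (hz : z ≠ 0) :
    Real.log (1 + ‖z - 1‖) ≤ ‖Complex.log z‖ := by
  rw [Real.log_le_iff_le_exp (by positivity)]
  have h := Complex.norm_exp_sub_sum_le_exp_norm_sub_sum (Complex.log z) 1
  simp [Complex.exp_log hz] at h
  linarith

lemma norm_log_le_neg_log_one_sub_norm {z : ℂ} (hz : ‖z - 1‖ < 1) :
    ‖Complex.log z‖ ≤ -Real.log (1 - ‖z - 1‖) := by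
  have hf := Complex.hasSum_taylorSeries_log hz
  rw [add_sub_cancel] at hf
  have hg := Complex.hasSum_taylorSeries_neg_log (z := (‖z - 1‖ : ℂ)) (by simpa using hz)
  have hg' : HasSum (fun n : ℕ => ‖z - 1‖ ^ n / n) (-Real.log (1 - ‖z - 1‖)) := by
    rw [← Complex.hasSum_ofReal]
    push_cast [Complex.ofReal_log (sub_nonneg.2 hz.le)]
    exact hg
  exact hf.norm_le_of_bounded hg' fun n => by simp

/-- First half of Lemma A.1: for `0 < α < 1` and `|z - 1| < α`,
`(log(1+α)/α)·|1-z| ≤ |Log z| ≤ (|log(1-α)|/α)·|1-z|`. -/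
theorem stmt_0 (α : ℝ) (hα0 : 0 < α) (hα1 : α < 1) (z : ℂ) (hz : ‖z - 1‖ < α) :
    (Real.log (1 + α) / α) * ‖1 - z‖ ≤ ‖Complex.log z‖ ∧
      ‖Complex.log z‖ ≤ (|Real.log (1 - α)| / α) * ‖1 - z‖ := by
  have hz0 : z ≠ 0 := by
    rintro rfl
    simp at hz
    linarith
  have ht0 : 0 ≤ ‖z - 1‖ / α := by positivity
  have ht1 : ‖z - 1‖ / α ≤ 1 := (div_le_one hα0).2 hz.le
  have hmul : ‖z - 1‖ / α * α = ‖z - 1‖ := div_mul_cancel₀ _ hα0.ne'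
  rw [norm_sub_rev 1 z, div_mul_comm (Real.log (1 + α)),
    div_mul_comm |Real.log (1 - α)|]
  constructor
  · have h := mul_log_le_log_one_add_mul (by linarith : 0 < 1 + α) ht0 ht1
    rw [hmul] at h
    exact h.trans (log_one_add_norm_le_norm_log hz0)
  · have h := mul_log_le_log_one_add_mul (by linarith : 0 < 1 + -α) ht0 ht1
    rw [mul_neg, hmul, ← sub_eq_add_neg, ← sub_eq_add_neg] at h
    rw [abs_of_nonpos (Real.log_nonpos (by linarith) (by linarith)), mul_neg]
    exact (norm_log_le_neg_log_one_sub_norm (hz.trans hα1)).trans (neg_le_neg h)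
end

section
/- Let δ > 0 and let z be a complex number not lying in the half-line (-∞, 0] with |Log z| ≤ δ. Then ((1 - e^{-δ})/δ)·|Log z| ≤ |1 - z| ≤ ((e^{δ} - 1)/δ)·|Log z|. (Second half of Lemma A.1 / inequality (A.2) of the paper.) -/
/-!
Put `w = Log z` and `u = 1 - z`, so that `z = e^w`. Comparing power series coefficientwise gives
`|1 - z| ≤ e^{|w|} - 1` and, when `|u| < 1`, also `|Log (1 - u)| ≤ -log (1 - |u|)`, that is
`1 - e^{-|w|} ≤ |1 - z|` (trivial when `|u| ≥ 1`). Convexity of the exponential on the chords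
from `0` to `δ` and from `0` to `-δ` then replaces `e^{±|w|}` by the linear bounds claimed.
-/

/-- The chord of `exp` from `0` to `s` lies above its graph. -/
lemma exp_chord (s t : ℝ) (h0 : 0 ≤ t) (h1 : t ≤ 1) :
    Real.exp (t * s) ≤ 1 + t * (Real.exp s - 1) := by
  have h := convexOn_exp.2 (Set.mem_univ (0 : ℝ)) (Set.mem_univ s)
    (sub_nonneg.2 h1) h0 (by ring)
  simp only [smul_eq_mul, mul_zero, zero_add, Real.exp_zero, mul_one] at h
  linarith

lemma norm_log_one_sub_le_neg_log (u : ℂ) (hu : ‖u‖ < 1) :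
    ‖Complex.log (1 - u)‖ ≤ -Real.log (1 - ‖u‖) := by
  have hc := Complex.hasSum_taylorSeries_neg_log hu
  have hr : HasSum (fun n : ℕ => ‖u‖ ^ n / n) (-Real.log (1 - ‖u‖)) := by
    rw [← hasSum_nat_add_iff' 1]
    simpa using Real.hasSum_pow_div_log_of_abs_lt_one (x := ‖u‖) (by simpa using hu)
  rw [← norm_neg, ← hc.tsum_eq]
  exact tsum_of_norm_bounded hr (fun n => by simp)

lemma one_sub_exp_neg_norm_log_le (z : ℂ) :
    1 - Real.exp (-‖Complex.log z‖) ≤ ‖1 - z‖ := by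
  by_cases hu : ‖1 - z‖ < 1
  · have h := norm_log_one_sub_le_neg_log (1 - z) hu
    rw [sub_sub_cancel] at h
    have h' := Real.exp_le_exp.2 (le_neg.1 h)
    rw [Real.exp_log (by linarith)] at h'
    linarith
  · linarith [Real.exp_pos (-‖Complex.log z‖)]

/-- Second half of Lemma A.1: for `δ > 0` and `z` off the half-line `(-∞, 0]` with
`|Log z| ≤ δ`, one has `((1 - e^{-δ})/δ)·|Log z| ≤ |1 - z| ≤ ((e^{δ} - 1)/δ)·|Log z|`. -/
theorem stmt_1 (δ : ℝ) (hδ : 0 < δ) (z : ℂ) (hz : ¬ (z.im = 0 ∧ z.re ≤ 0))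
    (hlog : ‖Complex.log z‖ ≤ δ) :
    ((1 - Real.exp (-δ)) / δ) * ‖Complex.log z‖ ≤ ‖1 - z‖ ∧
      ‖1 - z‖ ≤ ((Real.exp δ - 1) / δ) * ‖Complex.log z‖ := by
  have hz0 : z ≠ 0 := by
    rintro rfl
    simp at hz
  have h0 : 0 ≤ ‖Complex.log z‖ / δ := by positivity
  have h1 : ‖Complex.log z‖ / δ ≤ 1 := (div_le_one hδ).2 hlog
  have hpos := exp_chord δ _ h0 h1
  have hneg := exp_chord (-δ) _ h0 h1
  rw [mul_neg, div_mul_cancel₀ _ hδ.ne'] at hneg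
  rw [div_mul_cancel₀ _ hδ.ne'] at hpos
  have hlow := one_sub_exp_neg_norm_log_le z
  have hup : ‖1 - z‖ ≤ Real.exp ‖Complex.log z‖ - 1 := by
    have h := Complex.norm_exp_sub_sum_le_exp_norm_sub_sum (Complex.log z) 1
    simpa [Complex.exp_log hz0, norm_sub_rev] using h
  constructor
  · rw [div_mul_eq_mul_div, mul_div_assoc]
    linarith
  · rw [div_mul_eq_mul_div, mul_div_assoc]
    linarith
end

section
/- Let n ≥ 1, β > 0, let W be a real n×n diagonal matrix with positive diagonal entries w₁,…,wₙ, let m ∈ ℝⁿ with mᵢ ≥ 0 for all i, let K be a real n×n matrix, and let M ≥ 0 be a constant such that ⟨Kx, x'⟩ bound ‖Kx‖_W ≤ M·‖x‖_W holds for all x ∈ ℝⁿ, where ‖x‖_W = √(xᵀWx). Set pᵢ = √(mᵢ/wᵢ + β), L = K·diag(1/p₁,…,1/pₙ), and H = W⁻¹·Lᵀ·W·L. Then for every x ∈ ℝⁿ, ‖x‖_W² ≤ xᵀW(I + H)x ≤ (1 + M²/β)·‖x‖_W². In particular every eigenvalue of I + H (which is self-adjoint with respect to the W-inner product) lies in the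 interval [1, 1 + M²/β], so the W-condition number of I + H is at most 1 + M²/β, independently of n. (The paper's claim that ‖H‖ = O(β⁻¹‖K‖²) and cond(I + H) = O(β⁻¹‖K‖²) uniformly in the mesh parameter.) -/
/-!
The quadratic form splits as `xᵀW(I + H)x = ‖x‖_W² + ‖Lx‖_W²`, because the factor `W⁻¹` in `H`
cancels `W`. The lower bound is then the nonnegativity of `‖Lx‖_W²`. For the upper bound put
`y = diag(1/p) x`, so that `Lx = Ky` and `‖Lx‖_W² ≤ M²‖y‖_W²`; since `pᵢ² = mᵢ/wᵢ + β ≥ β`,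
comparing coordinates in the diagonal form gives `‖y‖_W² ≤ ‖x‖_W² / β`.
-/

open Matrix

lemma dotProduct_mulVec_eq_sum_of_isDiag {n : ℕ} {W : Matrix (Fin n) (Fin n) ℝ} (hW : W.IsDiag)
    (x : Fin n → ℝ) : x ⬝ᵥ W.mulVec x = ∑ i, W i i * x i ^ 2 := by
  obtain ⟨d, rfl⟩ : ∃ d, W = diagonal d := ⟨_, hW.diagonal_diag.symm⟩
  simp only [dotProduct, mulVec_diagonal, diagonal_apply_eq]
  exact Finset.sum_congr rfl fun i _ => by ring

lemma dotProduct_mulVec_nonneg_of_isDiag {n : ℕ} {W : Matrix (Fin n) (Fin n) ℝ} (hW : W.IsDiag)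
    (hpos : ∀ i, 0 < W i i) (x : Fin n → ℝ) : 0 ≤ x ⬝ᵥ W.mulVec x := by
  rw [dotProduct_mulVec_eq_sum_of_isDiag hW]
  exact Finset.sum_nonneg fun i _ => mul_nonneg (hpos i).le (sq_nonneg _)

/-- Uniform conditioning of `I + H`: with `pᵢ = √(mᵢ/wᵢ + β)`, `L = K·diag(1/p)` and
`H = W⁻¹LᵀWL`, one has `‖x‖_W² ≤ xᵀW(I+H)x ≤ (1 + M²/β)·‖x‖_W²` for all `x`, where
`M` bounds the `W`-operator norm of `K`. -/
theorem stmt_13 (n : ℕ) (hn : 1 ≤ n) (β : ℝ) (hβ : 0 < β)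
    (W : Matrix (Fin n) (Fin n) ℝ) (hWdiag : W.IsDiag) (hWpos : ∀ i, 0 < W i i)
    (m : Fin n → ℝ) (hm : ∀ i, 0 ≤ m i)
    (K : Matrix (Fin n) (Fin n) ℝ) (M : ℝ) (hM : 0 ≤ M)
    (hKbound : ∀ x : Fin n → ℝ,
      Real.sqrt (K.mulVec x ⬝ᵥ W.mulVec (K.mulVec x)) ≤ M * Real.sqrt (x ⬝ᵥ W.mulVec x))
    (p : Fin n → ℝ) (hp : ∀ i, p i = Real.sqrt (m i / W i i + β))
    (L : Matrix (Fin n) (Fin n) ℝ) (hL : L = K * diagonal (fun i => (p i)⁻¹))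
    (H : Matrix (Fin n) (Fin n) ℝ) (hH : H = W⁻¹ * Lᵀ * W * L) :
    ∀ x : Fin n → ℝ,
      x ⬝ᵥ W.mulVec x ≤ x ⬝ᵥ W.mulVec ((1 + H).mulVec x) ∧
        x ⬝ᵥ W.mulVec ((1 + H).mulVec x) ≤ (1 + M ^ 2 / β) * (x ⬝ᵥ W.mulVec x) := by
  intro x
  -- `W` is invertible, so `W * W⁻¹ = 1` is not affected by the junk value of `⁻¹`.
  have hdet : IsUnit W.det := by
    rw [← hWdiag.diagonal_diag, det_diagonal]
    exact (Finset.prod_pos fun i _ => hWpos i).ne'.isUnit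
  have hWH : W * H = Lᵀ * (W * L) := by
    rw [hH, Matrix.mul_assoc, Matrix.mul_assoc, ← Matrix.mul_assoc W,
      Matrix.mul_nonsing_inv W hdet, Matrix.one_mul]
  have key : x ⬝ᵥ W.mulVec ((1 + H).mulVec x)
      = x ⬝ᵥ W.mulVec x + L.mulVec x ⬝ᵥ W.mulVec (L.mulVec x) := by
    rw [add_mulVec, one_mulVec, mulVec_add, dotProduct_add, mulVec_mulVec, hWH,
      ← mulVec_mulVec, ← mulVec_mulVec, dotProduct_mulVec x Lᵀ, vecMul_transpose]
  have hLnonneg := dotProduct_mulVec_nonneg_of_isDiag hWdiag hWpos (L.mulVec x)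
  set y : Fin n → ℝ := fun i => (p i)⁻¹ * x i with hy
  have hLx : L.mulVec x = K.mulVec y := by
    rw [hL, ← mulVec_mulVec]
    congr 1
    ext i
    rw [mulVec_diagonal]
  have hynonneg := dotProduct_mulVec_nonneg_of_isDiag hWdiag hWpos y
  have hKy : L.mulVec x ⬝ᵥ W.mulVec (L.mulVec x) ≤ M ^ 2 * (y ⬝ᵥ W.mulVec y) := by
    have h := pow_le_pow_left₀ (Real.sqrt_nonneg _) (hKbound y) 2
    rw [← hLx, mul_pow, Real.sq_sqrt hLnonneg, Real.sq_sqrt hynonneg] at h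
    exact h
  have hyx : y ⬝ᵥ W.mulVec y ≤ (x ⬝ᵥ W.mulVec x) / β := by
    rw [dotProduct_mulVec_eq_sum_of_isDiag hWdiag, dotProduct_mulVec_eq_sum_of_isDiag hWdiag,
      Finset.sum_div]
    refine Finset.sum_le_sum fun i _ => ?_
    have hmw : 0 ≤ m i / W i i := div_nonneg (hm i) (hWpos i).le
    have hp2 : p i ^ 2 = m i / W i i + β := by
      rw [hp i, Real.sq_sqrt (by linarith)]
    have hy2 : W i i * y i ^ 2 = W i i * x i ^ 2 / p i ^ 2 := by
      simp only [hy]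
      rw [mul_pow, inv_pow]
      ring
    rw [hy2]
    exact div_le_div_of_nonneg_left (mul_nonneg (hWpos i).le (sq_nonneg _)) hβ (by linarith)
  rw [key]
  refine ⟨by linarith, ?_⟩
  calc x ⬝ᵥ W.mulVec x + L.mulVec x ⬝ᵥ W.mulVec (L.mulVec x)
      ≤ x ⬝ᵥ W.mulVec x + M ^ 2 * ((x ⬝ᵥ W.mulVec x) / β) := by
        have := mul_le_mul_of_nonneg_left hyx (sq_nonneg M)
        linarith
    _ = (1 + M ^ 2 / β) * (x ⬝ᵥ W.mulVec x) := by ring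
end
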